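/- Let (r_1, r_2) be a consecutive pair of rows with supp(r_1) ⊆ supp(r_2) that fails the alternating sign condition (i.e. η(r_2) = (−1)^{C(r_1)+1} η(r_1)), and suppose C(r_2) ≥ 2·C(r_1). Let (r'_2, r'_1) be the result of the Case 2 row exchange. Then l(r'_1) = l(r_1), η(r'_1) = (−1)^{C(r_2)+1} η(r_1), l(r'_2) = l(r_2) + C(r_1), and η(r'_2) = (−1)^{C(r_1)} η(r_2). Moreover, the resulting pair (r'_2, r'_1) satisfies the alternating sign condition, i.e. η(r'_1) = (−1)^{C(r'_2)} η(r'_2). -/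

import Mathlib

/-- A row `r = (A, B, l, η)`: the data of an extended segment `([A, B], l, η)`
(with the constraints `B ≤ A` and `η ∈ {1, -1}` imposed as hypotheses via
`IsRow`). Its support is the integer interval `[B, A]`. -/
structure Row where
  A : ℤ
  B : ℤ
  l : ℤ
  eta : ℤ
deriving DecidableEq

instance : Inhabited Row := ⟨⟨0, 0, 0, 1⟩⟩

/-- `(-1)^n` for an integer `n` (only the parity of `n` matters). -/
def epow (n : ℤ) : ℤ := (-1) ^ n.natAbs

/-- `b(r) = A - B + 1`, the length of the support of `r`. -/
def Row.b (r : Row) : ℤ := r.A - r.B + 1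

/-- `C(r) = b(r) - 2l(r)`, the number of circles of `r`. -/
def Row.C (r : Row) : ℤ := r.b - 2 * r.l

/-- The defining constraints on a row: `B ≤ A` and `η ∈ {1, -1}`. -/
def IsRow (r : Row) : Prop := r.B ≤ r.A ∧ (r.eta = 1 ∨ r.eta = -1)

/-- The ordered pair of consecutive rows `(r₁, r₂)` satisfies the alternating
sign condition: `η(r₂) = (-1)^{C(r₁)} η(r₁)`. -/
def Alt (r₁ r₂ : Row) : Prop := r₂.eta = epow r₁.C * r₁.eta

/-- Case 1 row exchange of the consecutive pair `(r₁, r₂)` (for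
`supp(r₂) ⊆ supp(r₁)`); the result `(r₂', r₁')` is in the opposite order. -/
def exchange1 (r₁ r₂ : Row) : Row × Row :=
  let ε : ℤ := epow (r₁.A - r₁.B) * r₁.eta * r₂.eta
  let c₂ : ℤ := r₂.b - 2 * r₂.l
  let s₂ : Row := ⟨r₂.A, r₂.B, r₂.l, epow (r₁.A - r₁.B) * r₂.eta⟩
  let s₁ : Row :=
    if ε = 1 ∧ r₁.b - 2 * r₁.l < 2 * c₂ then
      ⟨r₁.A, r₁.B, r₁.b - (r₁.l + c₂), epow (r₂.A - r₂.B) * r₁.eta⟩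
    else if ε = 1 then
      ⟨r₁.A, r₁.B, r₁.l + c₂, epow (r₂.A - r₂.B + 1) * r₁.eta⟩
    else
      ⟨r₁.A, r₁.B, r₁.l - c₂, epow (r₂.A - r₂.B + 1) * r₁.eta⟩
  (s₂, s₁)

/-- Case 2 row exchange of the consecutive pair `(r₁, r₂)` (for
`supp(r₁) ⊆ supp(r₂)`); the result `(r₂', r₁')` is in the opposite order. -/
def exchange2 (r₁ r₂ : Row) : Row × Row :=
  let ε : ℤ := epow (r₁.A - r₁.B) * r₁.eta * r₂.eta
  let c₁ : ℤ := r₁.b - 2 * r₁.l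
  let s₁ : Row := ⟨r₁.A, r₁.B, r₁.l, epow (r₂.A - r₂.B) * r₁.eta⟩
  let s₂ : Row :=
    if ε = 1 ∧ r₂.b - 2 * r₂.l < 2 * c₁ then
      ⟨r₂.A, r₂.B, r₂.b - (r₂.l + c₁), epow (r₁.A - r₁.B) * r₂.eta⟩
    else if ε = 1 then
      ⟨r₂.A, r₂.B, r₂.l + c₁, epow (r₁.A - r₁.B + 1) * r₂.eta⟩
    else
      ⟨r₂.A, r₂.B, r₂.l - c₁, epow (r₁.A - r₁.B + 1) * r₂.eta⟩
  (s₂, s₁)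

/-!
For a row `r₁` with sign `±1`, the pair `(r₁, r₂)` fails the alternating sign condition exactly
when the sign `ε` of the exchange is `1`. Together with `2 * C(r₁) ≤ C(r₂)` this selects the branch
of the Case 2 exchange that moves `l(r₂)` up by `C(r₁)`. There `C(r₂)` drops by the even number
`2 * C(r₁)`, so `(-1)^{C(r₂)}` is unchanged. The new sign of `r₂` is `(-1)^{C(r₁)} η(r₂) = -η(r₁)`,
and the new sign of `r₁` is `(-1)^{C(r₂) + 1} η(r₁)`, which is the alternating sign condition.
-/

theorem epow_eq_negOnePow (n : ℤ) : epow n = n.negOnePow := by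
  rw [epow, ← Int.coe_negOnePow_natCast, Int.natCast_natAbs, Int.negOnePow_abs]

theorem epow_eq_epow_iff {m n : ℤ} : epow m = epow n ↔ Even (m - n) := by
  rw [epow_eq_negOnePow, epow_eq_negOnePow, Units.val_inj, Int.negOnePow_eq_iff]

theorem epow_add_one (n : ℤ) : epow (n + 1) = -epow n := by
  simp only [epow_eq_negOnePow, Int.negOnePow_succ, Units.val_neg]

theorem epow_mul_self (n : ℤ) : epow n * epow n = 1 := by
  rw [epow_eq_negOnePow, ← Units.val_mul, Int.units_mul_self, Units.val_one]

theorem epow_sub_two_mul (m n : ℤ) : epow (m - 2 * n) = epow m :=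
  epow_eq_epow_iff.2 ⟨-n, by ring⟩

theorem Row.epow_C (r : Row) : epow r.C = epow (r.A - r.B + 1) :=
  epow_sub_two_mul r.b r.l

theorem Row.epow_C_add_one (r : Row) : epow (r.C + 1) = epow (r.A - r.B) := by
  rw [epow_add_one, r.epow_C, epow_add_one, neg_neg]

theorem Row.C_mk_l_add (r : Row) (k η : ℤ) : Row.C ⟨r.A, r.B, r.l + k, η⟩ = r.C - 2 * k := by
  simp only [Row.C, Row.b]
  ring

theorem IsRow.eta_mul_self {r : Row} (h : IsRow r) : r.eta * r.eta = 1 :=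
  mul_self_eq_one_iff.2 h.2

/-- The sign `ε = (-1)^{A₁ - B₁} η₁ η₂` that governs the case distinction in the row exchange of
`(r₁, r₂)`; this is the local `ε` of `exchange1` and `exchange2`. -/
def exchangeSign (r₁ r₂ : Row) : ℤ := epow (r₁.A - r₁.B) * r₁.eta * r₂.eta

section

variable {r₁ r₂ : Row}

theorem exchangeSign_eq_one_iff (h₁ : IsRow r₁) :
    exchangeSign r₁ r₂ = 1 ↔ r₂.eta = epow (r₁.C + 1) * r₁.eta := by
  have mul_self_eq_one :
      epow (r₁.A - r₁.B) * r₁.eta * (epow (r₁.A - r₁.B) * r₁.eta) = 1 := by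
    rw [mul_mul_mul_comm, epow_mul_self, h₁.eta_mul_self, one_mul]
  rw [exchangeSign, r₁.epow_C_add_one, ← mul_self_eq_one]
  exact (IsUnit.of_mul_eq_one _ mul_self_eq_one).mul_right_inj

theorem exchange2_of_exchangeSign_eq_one (hε : exchangeSign r₁ r₂ = 1) (hC : 2 * r₁.C ≤ r₂.C) :
    exchange2 r₁ r₂ =
      (⟨r₂.A, r₂.B, r₂.l + r₁.C, epow r₁.C * r₂.eta⟩,
        ⟨r₁.A, r₁.B, r₁.l, epow (r₂.C + 1) * r₁.eta⟩) := by
  rw [r₁.epow_C, r₂.epow_C_add_one, exchange2, if_neg fun h => hC.not_gt h.2]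
  exact congrArg (·, _) (if_pos hε)

theorem alt_of_eta_eq_epow_C_add_one (hfail : r₂.eta = epow (r₁.C + 1) * r₁.eta) :
    Alt ⟨r₂.A, r₂.B, r₂.l + r₁.C, epow r₁.C * r₂.eta⟩
      ⟨r₁.A, r₁.B, r₁.l, epow (r₂.C + 1) * r₁.eta⟩ := by
  have new_eta : epow r₁.C * r₂.eta = -r₁.eta := by
    rw [hfail, epow_add_one, neg_mul, mul_neg, ← mul_assoc, epow_mul_self, one_mul]
  rw [Alt, Row.C_mk_l_add, epow_sub_two_mul]
  change epow (r₂.C + 1) * r₁.eta = epow r₂.C * (epow r₁.C * r₂.eta)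
  rw [new_eta, epow_add_one, neg_mul, mul_neg]

end

/-- Swap up (Lemma `swap up`): if `(r₁, r₂)` is a consecutive pair with
`supp(r₁) ⊆ supp(r₂)` failing the alternating sign condition, with
`C(r₂) ≥ 2·C(r₁)`, and `(r₂', r₁')` is the result of the Case 2 row exchange,
then `l(r₁') = l(r₁)`, `η(r₁') = (−1)^{C(r₂)+1} η(r₁)`,
`l(r₂') = l(r₂) + C(r₁)`, `η(r₂') = (−1)^{C(r₁)} η(r₂)`, and the pair
`(r₂', r₁')` satisfies the alternating sign condition. -/
theorem swap_up (r₁ r₂ : Row) (h₁ : IsRow r₁) (h₂ : IsRow r₂)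
    (hsupp : r₂.B ≤ r₁.B ∧ r₁.A ≤ r₂.A)
    (hfail : r₂.eta = epow (r₁.C + 1) * r₁.eta)
    (hC : 2 * r₁.C ≤ r₂.C) :
    let p := exchange2 r₁ r₂
    p.2.l = r₁.l ∧
    p.2.eta = epow (r₂.C + 1) * r₁.eta ∧
    p.1.l = r₂.l + r₁.C ∧
    p.1.eta = epow r₁.C * r₂.eta ∧
    p.2.eta = epow p.1.C * p.1.eta := by
  have hε : exchangeSign r₁ r₂ = 1 := (exchangeSign_eq_one_iff h₁).2 hfail
  rw [exchange2_of_exchangeSign_eq_one hε hC]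
  exact ⟨rfl, rfl, rfl, rfl, alt_of_eta_eq_epow_C_add_one hfail⟩
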